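/- Let θ ∈ [0,π] and λ ∈ ℝ. The matrix W_I(θ) − λ·P is block positive (i.e. Re⟨x⊗y, (W_I(θ) − λP)(x⊗y)⟩ ≥ 0 for all x,y : Fin 4 → ℂ) if and only if λ ≤ 2. -/

import Mathlib

/-!
Fix `y` and put `Y m = ‖y m‖ ^ 2`. At `x ⊗ y` the form of `W[a,b,2-a,1-b] - 2 P` is
`∑ k, D k * ‖x k‖ ^ 2 - ‖u + v‖ ^ 2 - ‖u - v‖ ^ 2 / 2`, where `u = x₀ y₀ + x₂ y₂` and
`v = x₁ y₁ + x₃ y₃` collect the entries with equal signs in `Ψ`, and the weights `D` are linear in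
`Y`. The subtracted terms are bounded by a positive definite form in `(‖u‖, ‖v‖)`, so by duality of
quadratic forms it suffices that `3 - 4 E > 0` and `(3 - 4 E) (3 - 4 O) ≥ 1`, where
`E = Y₀ / D₀ + Y₂ / D₂` and `O = Y₁ / D₁ + Y₃ / D₃`.

Write `D₀, D₂ = N ± η` and `D₁, D₃ = M ± ζ`. If `(a, b)` lies in the disc of centre `(1, 1/2)` and
radius `1/2`, on whose boundary circle the class-I witnesses lie, then `(η, ζ)` lies in the disc
having the segment from `0` to `(Y₀ - Y₂, Y₁ - Y₃)` as a diameter. Combined with lower bounds for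
`N` and `M`, this reduces the determinant inequality to a sum of two squares. Conversely,
`x = y = (1, 0, 1, 0)` forces `λ ≤ 2`.
-/

open Matrix Complex Real

/-- The tensor (product) vector `x ⊗ y` in `ℂ¹⁶`. -/
noncomputable def tensorVec (x y : Fin 4 → ℂ) : Fin 4 × Fin 4 → ℂ :=
  fun p => x p.1 * y p.2

/-- The expectation `⟨v, W v⟩ = ∑ i, conj (v i) * (W *ᵥ v) i`. -/
noncomputable def expec (W : Matrix (Fin 4 × Fin 4) (Fin 4 × Fin 4) ℂ)
    (v : Fin 4 × Fin 4 → ℂ) : ℂ :=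
  ∑ i, star (v i) * W.mulVec v i

/-- The Bell-diagonal matrix `W[a,b,c,d]` with `(α₀,α₁,α₂,α₃) = (a,b,c,d)`:
`W((k,m),(k',m')) = α_{(m−k) mod 4}` if `k=k', m=m'`; `−1` if `k=m, k'=m', k≠k'`;
`0` otherwise. -/
noncomputable def Wabcd (a b c d : ℝ) : Matrix (Fin 4 × Fin 4) (Fin 4 × Fin 4) ℂ :=
  fun p q =>
    if p.1 = q.1 ∧ p.2 = q.2 then ((![a, b, c, d] (p.2 - p.1) : ℝ) : ℂ)
    else if p.1 = p.2 ∧ q.1 = q.2 ∧ p.1 ≠ q.1 then -1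
    else 0

/-- The class-I witness `W_I(θ)`. -/
noncomputable def WI (θ : ℝ) : Matrix (Fin 4 × Fin 4) (Fin 4 × Fin 4) ℂ :=
  Wabcd ((2 - Real.sin θ) / 2) ((1 + Real.cos θ) / 2)
        (2 - (2 - Real.sin θ) / 2) (1 - (1 + Real.cos θ) / 2)

/-- The class-II witness `W_II(θ)`. -/
noncomputable def WII (θ : ℝ) : Matrix (Fin 4 × Fin 4) (Fin 4 × Fin 4) ℂ :=
  Wabcd ((1 + Real.cos θ) / 2) ((2 - Real.sin θ) / 2)
        (1 - (1 + Real.cos θ) / 2) (2 - (2 - Real.sin θ) / 2)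

/-- The maximally entangled vector `Ψ(j,j') = (−1)^{j+1}/2` if `j = j'`, else `0`. -/
noncomputable def PsiVec : Fin 4 × Fin 4 → ℂ :=
  fun p => if p.1 = p.2 then ((-1 : ℂ) ^ ((p.1 : ℕ) + 1)) / 2 else 0

/-- The rank-one projector `P = |Ψ⟩⟨Ψ|`. -/
noncomputable def Pmat : Matrix (Fin 4 × Fin 4) (Fin 4 × Fin 4) ℂ :=
  fun u v => PsiVec u * star (PsiVec v)

/-- The indicator of the diagonal, i.e. the unnormalised maximally entangled vector with all signs
positive; it carries the off-diagonal part of `W[a,b,c,d]`. -/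
noncomputable def diagVec : Fin 4 × Fin 4 → ℂ :=
  fun p => if p.1 = p.2 then 1 else 0

/-- The coefficient of `‖x k‖ ^ 2` contributed at `x ⊗ y` by the diagonal part of `W[a,b,c,d]`,
where `Y m = ‖y m‖ ^ 2`. The first coefficient is `a + 1` because the rank-one matrix split off
from `W[a,b,c,d]` has diagonal entries `1`. -/
def siteWeight (a b c d : ℝ) (Y : Fin 4 → ℝ) (k : Fin 4) : ℝ :=
  (a + 1) * Y k + b * Y (k + 1) + c * Y (k + 2) + d * Y (k + 3)

section Expectation

lemma expec_eq_dotProduct (A : Matrix (Fin 4 × Fin 4) (Fin 4 × Fin 4) ℂ)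
    (v : Fin 4 × Fin 4 → ℂ) : expec A v = star v ⬝ᵥ A *ᵥ v :=
  rfl

lemma expec_sub (A B : Matrix (Fin 4 × Fin 4) (Fin 4 × Fin 4) ℂ) (v : Fin 4 × Fin 4 → ℂ) :
    expec (A - B) v = expec A v - expec B v := by
  simp only [expec_eq_dotProduct, sub_mulVec, dotProduct_sub]

lemma expec_smul (r : ℂ) (A : Matrix (Fin 4 × Fin 4) (Fin 4 × Fin 4) ℂ)
    (v : Fin 4 × Fin 4 → ℂ) : expec (r • A) v = r * expec A v := by
  simp only [expec_eq_dotProduct, smul_mulVec, dotProduct_smul, smul_eq_mul]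

lemma expec_diagonal (w : Fin 4 × Fin 4 → ℝ) (v : Fin 4 × Fin 4 → ℂ) :
    expec (diagonal fun p => (w p : ℂ)) v = ((∑ p, w p * ‖v p‖ ^ 2 : ℝ) : ℂ) := by
  simp only [expec, mulVec_diagonal]
  push_cast
  refine Finset.sum_congr rfl fun p _ => ?_
  rw [← Complex.conj_mul', starRingEnd_apply]
  ring

lemma expec_vecMulVec_star (f v : Fin 4 × Fin 4 → ℂ) :
    expec (vecMulVec f (star f)) v = ((‖star f ⬝ᵥ v‖ ^ 2 : ℝ) : ℂ) := by
  rw [expec_eq_dotProduct, vecMulVec_mulVec, dotProduct_smul, op_smul_eq_mul,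
    star_dotProduct, ← starRingEnd_apply, Complex.conj_mul']
  push_cast
  rfl

lemma Wabcd_eq_diagonal_sub_vecMulVec (a b c d : ℝ) :
    Wabcd a b c d =
      diagonal (fun p : Fin 4 × Fin 4 =>
        ((![a, b, c, d] (p.2 - p.1) + (if p.1 = p.2 then 1 else 0) : ℝ) : ℂ)) -
      vecMulVec diagVec (star diagVec) := by
  ext ⟨k, m⟩ ⟨k', m'⟩
  simp only [Wabcd, diagVec, Matrix.sub_apply, diagonal_apply, vecMulVec_apply, Pi.star_apply,
    Prod.mk.injEq, apply_ite star, star_one, star_zero, ofReal_add, apply_ite Complex.ofReal,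
    ofReal_one, ofReal_zero]
  grind

lemma star_diagVec_dotProduct_tensorVec (x y : Fin 4 → ℂ) :
    star diagVec ⬝ᵥ tensorVec x y =
      (x 0 * y 0 + x 2 * y 2) + (x 1 * y 1 + x 3 * y 3) := by
  simp only [dotProduct, Pi.star_apply, diagVec, tensorVec, apply_ite star, star_one, star_zero,
    ite_mul, one_mul, zero_mul, Fintype.sum_prod_type, Finset.sum_ite_eq, Finset.mem_univ,
    if_true, Fin.sum_univ_four]
  ring

lemma star_PsiVec_dotProduct_tensorVec (x y : Fin 4 → ℂ) :
    star PsiVec ⬝ᵥ tensorVec x y =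
      -1 / 2 * ((x 0 * y 0 + x 2 * y 2) - (x 1 * y 1 + x 3 * y 3)) := by
  have hstar : star PsiVec = PsiVec := by
    ext p
    simp [PsiVec, apply_ite star]
  rw [hstar]
  simp only [dotProduct, PsiVec, tensorVec, ite_mul, zero_mul, Fintype.sum_prod_type,
    Finset.sum_ite_eq, Finset.mem_univ, if_true, Fin.sum_univ_four, Fin.coe_ofNat_eq_mod,
    Nat.reduceMod]
  ring

lemma sum_mul_eq_siteWeight (a b c d : ℝ) (Y : Fin 4 → ℝ) (k : Fin 4) :
    ∑ m, (![a, b, c, d] (m - k) + if k = m then 1 else 0) * Y m = siteWeight a b c d Y k := by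
  rw [← Equiv.sum_comp (Equiv.addLeft k)]
  simp [Fin.sum_univ_four, siteWeight]

lemma sum_mul_norm_tensorVec_sq (a b c d : ℝ) (x y : Fin 4 → ℂ) :
    ∑ p : Fin 4 × Fin 4, (![a, b, c, d] (p.2 - p.1) + if p.1 = p.2 then 1 else 0) *
        ‖tensorVec x y p‖ ^ 2 =
      ∑ k, siteWeight a b c d (fun m => ‖y m‖ ^ 2) k * ‖x k‖ ^ 2 := by
  simp only [Fintype.sum_prod_type, ← sum_mul_eq_siteWeight, Finset.sum_mul, tensorVec, norm_mul]
  exact Finset.sum_congr rfl fun k _ => Finset.sum_congr rfl fun m _ => by ring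

lemma re_expec_Wabcd_sub_smul_Pmat (a b c d lam : ℝ) (x y : Fin 4 → ℂ) :
    (expec (Wabcd a b c d - (lam : ℂ) • Pmat) (tensorVec x y)).re =
      ∑ k, siteWeight a b c d (fun m => ‖y m‖ ^ 2) k * ‖x k‖ ^ 2
      - ‖(x 0 * y 0 + x 2 * y 2) + (x 1 * y 1 + x 3 * y 3)‖ ^ 2
      - lam / 4 * ‖(x 0 * y 0 + x 2 * y 2) - (x 1 * y 1 + x 3 * y 3)‖ ^ 2 := by
  have hP : Pmat = vecMulVec PsiVec (star PsiVec) := rfl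
  have hhalf : ‖(-1 / 2 : ℂ)‖ = 1 / 2 := by norm_num
  rw [Wabcd_eq_diagonal_sub_vecMulVec, expec_sub, expec_sub, expec_smul, hP,
    expec_vecMulVec_star, expec_vecMulVec_star, expec_diagonal,
    star_diagVec_dotProduct_tensorVec, star_PsiVec_dotProduct_tensorVec,
    sum_mul_norm_tensorVec_sq, norm_mul (-1 / 2 : ℂ), hhalf, ← Complex.ofReal_mul,
    ← Complex.ofReal_sub, ← Complex.ofReal_sub, Complex.ofReal_re]
  ring

end Expectation

section QuadraticForms

lemma norm_add_sq_add_half_norm_sub_sq_le {F : Type*} [NormedAddCommGroup F]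
    [InnerProductSpace ℝ F] (u v : F) :
    ‖u + v‖ ^ 2 + 1 / 2 * ‖u - v‖ ^ 2 ≤ 3 / 2 * (‖u‖ ^ 2 + ‖v‖ ^ 2) + ‖u‖ * ‖v‖ := by
  rw [norm_add_sq_real, norm_sub_sq_real]
  linarith [real_inner_le_norm u v]

lemma sum_mul_sq_le_sum_mul_sq_mul_sum_sq_div {ι : Type*} (s : Finset ι) (x y : ι → ℝ)
    {D : ι → ℝ} (hD : ∀ i ∈ s, 0 < D i) :
    (∑ i ∈ s, x i * y i) ^ 2 ≤ (∑ i ∈ s, D i * x i ^ 2) * ∑ i ∈ s, y i ^ 2 / D i := by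
  refine Finset.sum_sq_le_sum_mul_sum_of_sq_le_mul s (fun i hi => ?_) (fun i hi => ?_)
    fun i hi => ?_
  · exact mul_nonneg (hD i hi).le (sq_nonneg _)
  · exact div_nonneg (sq_nonneg _) (hD i hi).le
  · have := hD i hi
    exact le_of_eq (by field_simp)

lemma two_mul_mul_sub_sq_mul_le {A E U : ℝ} (hA : 0 ≤ A) (hE : 0 ≤ E) (h : U ^ 2 ≤ A * E)
    (t : ℝ) : 2 * t * U - t ^ 2 * E ≤ A := by
  have hsq : (2 * t * U) ^ 2 ≤ (A + t ^ 2 * E) ^ 2 :=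
    calc (2 * t * U) ^ 2 = 4 * t ^ 2 * U ^ 2 := by ring
      _ ≤ 4 * t ^ 2 * (A * E) := by gcongr
      _ ≤ (A + t ^ 2 * E) ^ 2 := by linarith [sq_nonneg (A - t ^ 2 * E)]
  linarith [le_of_sq_le_sq hsq (by positivity)]

/-- The matrix `!![3/2, 1/2; 1/2, 3/2]` of the form on the left has inverse
`!![3/4, -1/4; -1/4, 3/4]`; `hE` and `hdet` say that the latter dominates `diag(E, O)`. -/
lemma quadratic_le_add_of_sq_le_mul {A B E O U V : ℝ} (hA : 0 ≤ A) (hB : 0 ≤ B) (hE₀ : 0 ≤ E)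
    (hO₀ : 0 ≤ O) (hU : U ^ 2 ≤ A * E) (hV : V ^ 2 ≤ B * O)
    (hE : 0 < 3 - 4 * E) (hdet : 1 ≤ (3 - 4 * E) * (3 - 4 * O)) :
    3 / 2 * (U ^ 2 + V ^ 2) + U * V ≤ A + B := by
  set s := 3 / 2 * U + 1 / 2 * V with hs
  set t := 1 / 2 * U + 3 / 2 * V with ht
  have hAs : 2 * s * U - s ^ 2 * E ≤ A := two_mul_mul_sub_sq_mul_le hA hE₀ hU s
  have hBt : 2 * t * V - t ^ 2 * O ≤ B := two_mul_mul_sub_sq_mul_le hB hO₀ hV t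
  have hdual : 0 ≤ (3 - 4 * E) * s ^ 2 - 2 * s * t + (3 - 4 * O) * t ^ 2 := by
    refine nonneg_of_mul_nonneg_right ?_ hE
    have hsquares : 0 ≤ ((3 - 4 * E) * s - t) ^ 2 + ((3 - 4 * E) * (3 - 4 * O) - 1) * t ^ 2 :=
      add_nonneg (sq_nonneg _) (mul_nonneg (by linarith) (sq_nonneg _))
    linear_combination hsquares
  have hUst : U = 3 / 4 * s - 1 / 4 * t := by rw [hs, ht]; ring
  have hVst : V = 3 / 4 * t - 1 / 4 * s := by rw [hs, ht]; ring
  clear_value s t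
  subst hUst hVst
  linear_combination hAs + hBt + hdual / 4

end QuadraticForms

section Determinant

lemma quartic_nonneg_of_disc {δ ε η ζ : ℝ} (hdisc : η ^ 2 + ζ ^ 2 ≤ 2 * (δ * η + ε * ζ)) :
    0 ≤ (|δ| + |ε|) * ((3 * |δ| + |ε|) * ζ ^ 2 + (|δ| + 3 * |ε|) * η ^ 2) +
      2 * (η * ζ) * (8 * (δ * ε) - 3 * (δ * ζ + ε * η) + η * ζ) := by
  have hcross : 0 ≤ 4 * |δ * ε| * (η ^ 2 + ζ ^ 2) + 8 * (δ * ε) * (η * ζ) := by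
    have hamgm : 2 * |η * ζ| ≤ η ^ 2 + ζ ^ 2 := by
      rw [abs_mul, ← sq_abs η, ← sq_abs ζ]
      linarith [two_mul_le_add_sq |η| |ζ|]
    have hneg := neg_abs_le (δ * ε * (η * ζ))
    rw [abs_mul (δ * ε)] at hneg
    linarith [mul_le_mul_of_nonneg_left hamgm (abs_nonneg (δ * ε))]
  have hsq : (η ^ 2 + ζ ^ 2) ^ 2 ≤ (2 * (δ * η + ε * ζ)) ^ 2 := by gcongr
  have hsquares : 0 ≤ 3 * (δ * ζ + ε * η - η * ζ) ^ 2 + (η ^ 2 - ζ ^ 2) ^ 2 / 4 := by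
    positivity
  rw [abs_mul] at hcross
  linear_combination hcross + hsq / 4 + hsquares - (3 * ζ ^ 2 + η ^ 2) * sq_abs δ
    - (ζ ^ 2 + 3 * η ^ 2) * sq_abs ε

lemma sub_sq_mul_sub_sq_le_of_disc {δ ε η ζ N M : ℝ} (hN : 3 * |δ| + |ε| ≤ N)
    (hM : |δ| + 3 * |ε| ≤ M) (hdisc : η ^ 2 + ζ ^ 2 ≤ 2 * (δ * η + ε * ζ)) :
    (N ^ 2 - η ^ 2) * (M ^ 2 - ζ ^ 2) ≤
      (N * M + 8 * (δ * η) - 3 * η ^ 2) * (N * M + 8 * (ε * ζ) - 3 * ζ ^ 2) := by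
  have hN₀ : 0 ≤ N := le_trans (by positivity) hN
  have hM₀ : 0 ≤ M := le_trans (by positivity) hM
  have hmono : 4 * (|δ| + |ε|) * ((3 * |δ| + |ε|) * ζ ^ 2 + (|δ| + 3 * |ε|) * η ^ 2) ≤
      (N + M) * (N * ζ ^ 2 + M * η ^ 2) := by
    gcongr
    linarith
  have hNM : N * M * (4 * (η ^ 2 + ζ ^ 2)) ≤ N * M * (8 * (δ * η + ε * ζ)) :=
    mul_le_mul_of_nonneg_left (by linarith) (mul_nonneg hN₀ hM₀)
  linear_combination hmono + hNM + 4 * quartic_nonneg_of_disc hdisc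

lemma mul_add_sub_pos_of_disc {δ ε η ζ N M : ℝ} (hN : 3 * |δ| + |ε| ≤ N) (hM : |δ| + 3 * |ε| ≤ M)
    (hdisc : η ^ 2 + ζ ^ 2 ≤ 2 * (δ * η + ε * ζ)) (hη : η ^ 2 < N ^ 2) (hζ : ζ ^ 2 < M ^ 2) :
    0 < N * M + 8 * (δ * η) - 3 * η ^ 2 := by
  have hN₀ : 0 < N := (abs_nonneg η).trans_lt (abs_lt_of_sq_lt_sq hη (le_trans (by positivity) hN))
  have hM₀ : 0 < M := (abs_nonneg ζ).trans_lt (abs_lt_of_sq_lt_sq hζ (le_trans (by positivity) hM))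
  have hprod := (mul_pos (sub_pos.2 hη) (sub_pos.2 hζ)).trans_le
    (sub_sq_mul_sub_sq_le_of_disc hN hM hdisc)
  have hsum : 0 < (N * M + 8 * (δ * η) - 3 * η ^ 2) + (N * M + 8 * (ε * ζ) - 3 * ζ ^ 2) := by
    linarith [mul_pos hN₀ hM₀, sq_nonneg η, sq_nonneg ζ]
  rcases pos_and_pos_or_neg_and_neg_of_mul_pos hprod with h | h <;> linarith

lemma three_sub_four_mul_div_add_div {Y Y' T N M η : ℝ} (hN : N = (3 * (Y + Y') + T) / 2)
    (hM : M = (3 * T + (Y + Y')) / 2) (hpos : N + η ≠ 0) (hneg : N - η ≠ 0) :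
    3 - 4 * (Y / (N + η) + Y' / (N - η)) =
      (N * M + 4 * ((Y - Y') * η) - 3 * η ^ 2) / ((N + η) * (N - η)) := by
  field_simp
  rw [hM, hN]
  ring

lemma dual_bounds_of_disc {Y : Fin 4 → ℝ} {N M η ζ : ℝ} (hY : ∀ m, 0 ≤ Y m)
    (hN : N = (3 * (Y 0 + Y 2) + (Y 1 + Y 3)) / 2) (hM : M = (3 * (Y 1 + Y 3) + (Y 0 + Y 2)) / 2)
    (hη : η ^ 2 < N ^ 2) (hζ : ζ ^ 2 < M ^ 2)
    (hdisc : η ^ 2 + ζ ^ 2 ≤ (Y 0 - Y 2) * η + (Y 1 - Y 3) * ζ) :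
    0 < 3 - 4 * (Y 0 / (N + η) + Y 2 / (N - η)) ∧
      1 ≤ (3 - 4 * (Y 0 / (N + η) + Y 2 / (N - η))) *
        (3 - 4 * (Y 1 / (M + ζ) + Y 3 / (M - ζ))) := by
  obtain ⟨δ, hδ⟩ : ∃ δ, Y 0 - Y 2 = 2 * δ := ⟨(Y 0 - Y 2) / 2, by ring⟩
  obtain ⟨ε, hε⟩ : ∃ ε, Y 1 - Y 3 = 2 * ε := ⟨(Y 1 - Y 3) / 2, by ring⟩
  have hδabs : |δ| ≤ (Y 0 + Y 2) / 2 := abs_le.2 ⟨by linarith [hY 0], by linarith [hY 2]⟩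
  have hεabs : |ε| ≤ (Y 1 + Y 3) / 2 := abs_le.2 ⟨by linarith [hY 1], by linarith [hY 3]⟩
  have hNδ : 3 * |δ| + |ε| ≤ N := by linarith
  have hMε : |δ| + 3 * |ε| ≤ M := by linarith
  rw [hδ, hε] at hdisc
  replace hdisc : η ^ 2 + ζ ^ 2 ≤ 2 * (δ * η + ε * ζ) := by linarith
  have hEven : 0 < (N + η) * (N - η) := by linarith
  have hOdd : 0 < (M + ζ) * (M - ζ) := by linarith
  have hF := mul_add_sub_pos_of_disc hNδ hMε hdisc hη hζ
  have hdet := sub_sq_mul_sub_sq_le_of_disc hNδ hMε hdisc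
  rw [three_sub_four_mul_div_add_div hN hM (left_ne_zero_of_mul hEven.ne')
      (right_ne_zero_of_mul hEven.ne'),
    three_sub_four_mul_div_add_div hM hN (left_ne_zero_of_mul hOdd.ne')
      (right_ne_zero_of_mul hOdd.ne'),
    div_mul_div_comm, one_le_div (mul_pos hEven hOdd), hδ, hε]
  exact ⟨div_pos (by linarith) hEven, by linear_combination hdet⟩

end Determinant

section Moduli

variable {a b : ℝ}

lemma siteWeight_pos (hab : (a - 1) ^ 2 + (b - 1 / 2) ^ 2 ≤ 1 / 4) {Y : Fin 4 → ℝ}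
    (hY : ∀ m, 0 < Y m) (k : Fin 4) : 0 < siteWeight a b (2 - a) (1 - b) Y k := by
  have ha : |a - 1| ≤ 1 / 2 :=
    abs_le_of_sq_le_sq (by linarith [sq_nonneg (b - 1 / 2)]) (by norm_num)
  have hb : |b - 1 / 2| ≤ 1 / 2 :=
    abs_le_of_sq_le_sq (by linarith [sq_nonneg (a - 1)]) (by norm_num)
  rw [abs_le] at ha hb
  have h₀ : 0 < (a + 1) * Y k := mul_pos (by linarith) (hY k)
  have h₁ : 0 ≤ b * Y (k + 1) := mul_nonneg (by linarith) (hY _).le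
  have h₂ : 0 < (2 - a) * Y (k + 2) := mul_pos (by linarith) (hY _)
  have h₃ : 0 ≤ (1 - b) * Y (k + 3) := mul_nonneg (by linarith) (hY _).le
  rw [siteWeight]
  linarith

lemma siteWeight_dual_bounds (hab : (a - 1) ^ 2 + (b - 1 / 2) ^ 2 ≤ 1 / 4) {Y D : Fin 4 → ℝ}
    (hY : ∀ m, 0 < Y m) (hD : D = siteWeight a b (2 - a) (1 - b) Y) :
    0 < 3 - 4 * (Y 0 / D 0 + Y 2 / D 2) ∧
      1 ≤ (3 - 4 * (Y 0 / D 0 + Y 2 / D 2)) * (3 - 4 * (Y 1 / D 1 + Y 3 / D 3)) := by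
  have hDpos (k) : 0 < D k := hD ▸ siteWeight_pos hab hY k
  obtain ⟨η, hη⟩ : ∃ η, η = (a - 1 / 2) * (Y 0 - Y 2) + (b - 1 / 2) * (Y 1 - Y 3) := ⟨_, rfl⟩
  obtain ⟨ζ, hζ⟩ : ∃ ζ, ζ = (a - 1 / 2) * (Y 1 - Y 3) - (b - 1 / 2) * (Y 0 - Y 2) := ⟨_, rfl⟩
  obtain ⟨N, hN⟩ : ∃ N, N = (3 * (Y 0 + Y 2) + (Y 1 + Y 3)) / 2 := ⟨_, rfl⟩
  obtain ⟨M, hM⟩ : ∃ M, M = (3 * (Y 1 + Y 3) + (Y 0 + Y 2)) / 2 := ⟨_, rfl⟩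
  have hD0 : D 0 = N + η := by
    simp only [hD, siteWeight, zero_add, hN, hη]
    ring
  have hD1 : D 1 = M + ζ := by
    simp only [hD, siteWeight, Fin.reduceAdd, hM, hζ]
    ring
  have hD2 : D 2 = N - η := by
    simp only [hD, siteWeight, Fin.reduceAdd, hN, hη]
    ring
  have hD3 : D 3 = M - ζ := by
    simp only [hD, siteWeight, Fin.reduceAdd, hM, hζ]
    ring
  have hdisc : η ^ 2 + ζ ^ 2 ≤ (Y 0 - Y 2) * η + (Y 1 - Y 3) * ζ := by
    have := mul_nonneg (add_nonneg (sq_nonneg (Y 0 - Y 2)) (sq_nonneg (Y 1 - Y 3)))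
      (sub_nonneg.2 hab)
    rw [hη, hζ]
    linear_combination this
  have hEven : 0 < (N + η) * (N - η) := hD0 ▸ hD2 ▸ mul_pos (hDpos 0) (hDpos 2)
  have hOdd : 0 < (M + ζ) * (M - ζ) := hD1 ▸ hD3 ▸ mul_pos (hDpos 1) (hDpos 3)
  rw [hD0, hD1, hD2, hD3]
  exact dual_bounds_of_disc (fun m => (hY m).le) hN hM (by linarith) (by linarith) hdisc

lemma quadratic_le_sum_siteWeight_of_ne_zero (hab : (a - 1) ^ 2 + (b - 1 / 2) ^ 2 ≤ 1 / 4)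
    (x : Fin 4 → ℝ) {y : Fin 4 → ℝ} (hy : ∀ m, y m ≠ 0) :
    3 / 2 * ((x 0 * y 0 + x 2 * y 2) ^ 2 + (x 1 * y 1 + x 3 * y 3) ^ 2) +
        (x 0 * y 0 + x 2 * y 2) * (x 1 * y 1 + x 3 * y 3) ≤
      ∑ k, siteWeight a b (2 - a) (1 - b) (fun m => y m ^ 2) k * x k ^ 2 := by
  set D := siteWeight a b (2 - a) (1 - b) (fun m => y m ^ 2) with hD
  have hY (m) : 0 < y m ^ 2 := sq_pos_of_ne_zero (hy m)
  have hDpos (k) : 0 < D k := siteWeight_pos hab hY k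
  obtain ⟨hE, hdet⟩ := siteWeight_dual_bounds hab hY hD
  have hcauchy (i j : Fin 4) (hij : i ≠ j) : (x i * y i + x j * y j) ^ 2 ≤
      (D i * x i ^ 2 + D j * x j ^ 2) * (y i ^ 2 / D i + y j ^ 2 / D j) := by
    simpa only [Finset.sum_pair hij] using
      sum_mul_sq_le_sum_mul_sq_mul_sum_sq_div {i, j} x y fun k _ => hDpos k
  have hnum (i j : Fin 4) : 0 ≤ D i * x i ^ 2 + D j * x j ^ 2 :=
    add_nonneg (mul_nonneg (hDpos i).le (sq_nonneg _)) (mul_nonneg (hDpos j).le (sq_nonneg _))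
  have hden (i j : Fin 4) : 0 ≤ y i ^ 2 / D i + y j ^ 2 / D j :=
    add_nonneg (div_pos (hY i) (hDpos i)).le (div_pos (hY j) (hDpos j)).le
  have := quadratic_le_add_of_sq_le_mul (hnum 0 2) (hnum 1 3) (hden 0 2) (hden 1 3)
    (hcauchy 0 2 (by decide)) (hcauchy 1 3 (by decide)) hE hdet
  rw [Fin.sum_univ_four]
  linarith

lemma quadratic_le_sum_siteWeight (hab : (a - 1) ^ 2 + (b - 1 / 2) ^ 2 ≤ 1 / 4)
    (x y : Fin 4 → ℝ) :
    3 / 2 * ((x 0 * y 0 + x 2 * y 2) ^ 2 + (x 1 * y 1 + x 3 * y 3) ^ 2) +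
        (x 0 * y 0 + x 2 * y 2) * (x 1 * y 1 + x 3 * y 3) ≤
      ∑ k, siteWeight a b (2 - a) (1 - b) (fun m => y m ^ 2) k * x k ^ 2 := by
  have hdense : Dense (Set.univ.pi fun _ : Fin 4 => ({0}ᶜ : Set ℝ)) :=
    dense_pi Set.univ fun _ _ => dense_compl_singleton 0
  refine hdense.induction (fun z hz => ?_) ?_ y
  · exact quadratic_le_sum_siteWeight_of_ne_zero hab x fun m => hz m trivial
  · unfold siteWeight
    exact isClosed_le (by fun_prop) (by fun_prop)

end Moduli

section BlockPositivity

lemma norm_add_sq_add_half_norm_sub_sq_le_sum_siteWeight {a b : ℝ}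
    (hab : (a - 1) ^ 2 + (b - 1 / 2) ^ 2 ≤ 1 / 4) (x y : Fin 4 → ℂ) :
    ‖(x 0 * y 0 + x 2 * y 2) + (x 1 * y 1 + x 3 * y 3)‖ ^ 2 +
        1 / 2 * ‖(x 0 * y 0 + x 2 * y 2) - (x 1 * y 1 + x 3 * y 3)‖ ^ 2 ≤
      ∑ k, siteWeight a b (2 - a) (1 - b) (fun m => ‖y m‖ ^ 2) k * ‖x k‖ ^ 2 := by
  have htriangle (i j : Fin 4) : ‖x i * y i + x j * y j‖ ≤ ‖x i‖ * ‖y i‖ + ‖x j‖ * ‖y j‖ := by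
    simpa only [norm_mul] using norm_add_le (x i * y i) (x j * y j)
  calc
    _ ≤ 3 / 2 * (‖x 0 * y 0 + x 2 * y 2‖ ^ 2 + ‖x 1 * y 1 + x 3 * y 3‖ ^ 2) +
        ‖x 0 * y 0 + x 2 * y 2‖ * ‖x 1 * y 1 + x 3 * y 3‖ :=
      norm_add_sq_add_half_norm_sub_sq_le _ _
    _ ≤ 3 / 2 * ((‖x 0‖ * ‖y 0‖ + ‖x 2‖ * ‖y 2‖) ^ 2 + (‖x 1‖ * ‖y 1‖ + ‖x 3‖ * ‖y 3‖) ^ 2) +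
        (‖x 0‖ * ‖y 0‖ + ‖x 2‖ * ‖y 2‖) * (‖x 1‖ * ‖y 1‖ + ‖x 3‖ * ‖y 3‖) := by
      gcongr <;> exact htriangle _ _
    _ ≤ _ := quadratic_le_sum_siteWeight hab (fun k => ‖x k‖) fun m => ‖y m‖

lemma re_expec_Wabcd_sub_smul_Pmat_even (a b d lam : ℝ) :
    (expec (Wabcd a b (2 - a) d - (lam : ℂ) • Pmat)
      (tensorVec ![1, 0, 1, 0] ![1, 0, 1, 0])).re = 2 - lam := by
  rw [re_expec_Wabcd_sub_smul_Pmat]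
  simp only [Fin.sum_univ_four, siteWeight, Fin.reduceAdd, zero_add, cons_val, norm_zero, norm_one,
    mul_zero, add_zero, sub_zero, mul_one]
  norm_num
  ring

theorem WI_minus_lambdaP_blockPositive_iff_general {a b : ℝ}
    (hab : (a - 1) ^ 2 + (b - 1 / 2) ^ 2 ≤ 1 / 4) (lam : ℝ) :
    (∀ x y : Fin 4 → ℂ,
      0 ≤ (expec (Wabcd a b (2 - a) (1 - b) - (lam : ℂ) • Pmat) (tensorVec x y)).re) ↔
      lam ≤ 2 := by
  constructor
  · intro hpos
    have heven := hpos ![1, 0, 1, 0] ![1, 0, 1, 0]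
    rwa [re_expec_Wabcd_sub_smul_Pmat_even, sub_nonneg] at heven
  · intro hlam x y
    rw [re_expec_Wabcd_sub_smul_Pmat]
    have hlam_mul : lam / 4 * ‖(x 0 * y 0 + x 2 * y 2) - (x 1 * y 1 + x 3 * y 3)‖ ^ 2 ≤
        1 / 2 * ‖(x 0 * y 0 + x 2 * y 2) - (x 1 * y 1 + x 3 * y 3)‖ ^ 2 :=
      mul_le_mul_of_nonneg_right (by linarith) (sq_nonneg _)
    linarith [norm_add_sq_add_half_norm_sub_sq_le_sum_siteWeight hab x y]

end BlockPositivity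

theorem WI_minus_lambdaP_blockPositive_iff (θ lam : ℝ) (hθ : θ ∈ Set.Icc 0 π) :
    (∀ x y : Fin 4 → ℂ,
      0 ≤ (expec (WI θ - (lam : ℂ) • Pmat) (tensorVec x y)).re) ↔ lam ≤ 2 :=
  WI_minus_lambdaP_blockPositive_iff_general (by linarith [Real.sin_sq_add_cos_sq θ]) lam
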